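/- arXiv:1310.2108 — 3 statements merged into one kernel-verified Lean document; each statement's English description precedes it below -/
import Mathlib

section
/- Let T, E₁, E₂ : ℝ × ℝ → ℝ³ and k₁, k₂ : ℝ × ℝ → ℝ be smooth, and suppose that for each fixed t the frame satisfies Tₛ = k₁E₁ + k₂E₂, (E₁)ₛ = k₁T, (E₂)ₛ = k₂T, and that T_t = −(k₂)ₛE₁ + (k₁)ₛE₂, (E₁)_t = −(k₂)ₛT + uE₂, (E₂)_t = (k₁)ₛT − uE₁ for a smooth function u : ℝ × ℝ → ℝ, where (T, E₁, E₂) is pairwise ⟨·,·⟩_L-orthogonal with ⟨T,T⟩_L = −1, ⟨E₁,E₁⟩_L = ⟨E₂,E₂⟩_L = 1. Then uₛ = k₁(k₁)ₛ + k₂(k₂)ₛ; consequently, for each t there is a constant c(t) with u(s,t) = ½(k₁² + k₂²)(s,t) + c(t). -/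
noncomputable section

open Real

/-- Minkowski 3-space: ℝ³ as a vector type. -/
abbrev V3 : Type := Fin 3 → ℝ

/-- Lorentzian inner product ⟨x,y⟩_L = −x₁y₁ + x₂y₂ + x₃y₃ on ℝ³. -/
def lor (x y : V3) : ℝ := -(x 0 * y 0) + x 1 * y 1 + x 2 * y 2

/-- Lorentzian cross product x ×_L y = (x₃y₂ − x₂y₃, x₃y₁ − x₁y₃, x₁y₂ − x₂y₁). -/
def lcross (x y : V3) : V3 :=
  ![x 2 * y 1 - x 1 * y 2, x 2 * y 0 - x 0 * y 2, x 0 * y 1 - x 1 * y 0]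

/-- Partial derivative with respect to the first variable `s`. -/
def pds {E : Type*} [NormedAddCommGroup E] [NormedSpace ℝ E]
    (f : ℝ × ℝ → E) (p : ℝ × ℝ) : E := deriv (fun s => f (s, p.2)) p.1

/-- Partial derivative with respect to the second variable `t`. -/
def pdt {E : Type*} [NormedAddCommGroup E] [NormedSpace ℝ E]
    (f : ℝ × ℝ → E) (p : ℝ × ℝ) : E := deriv (fun t => f (p.1, t)) p.2

theorem pds_eq {E : Type*} [NormedAddCommGroup E] [NormedSpace ℝ E]
    {f : ℝ × ℝ → E} (hf : Differentiable ℝ f) (p : ℝ × ℝ) : pds f p = fderiv ℝ f p (1, 0) := by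
  have h1 : HasDerivAt (fun s : ℝ => (s, p.2)) ((1 : ℝ), (0 : ℝ)) p.1 :=
    (hasDerivAt_id p.1).prodMk (hasDerivAt_const p.1 p.2)
  exact ((hf p).hasFDerivAt.comp_hasDerivAt p.1 h1).deriv

theorem pdt_eq {E : Type*} [NormedAddCommGroup E] [NormedSpace ℝ E]
    {f : ℝ × ℝ → E} (hf : Differentiable ℝ f) (p : ℝ × ℝ) : pdt f p = fderiv ℝ f p (0, 1) := by
  have h1 : HasDerivAt (fun t : ℝ => (p.1, t)) ((0 : ℝ), (1 : ℝ)) p.2 :=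
    (hasDerivAt_const p.2 p.1).prodMk (hasDerivAt_id p.2)
  exact ((hf p).hasFDerivAt.comp_hasDerivAt p.2 h1).deriv

theorem diff_of_smooth {E : Type*} [NormedAddCommGroup E] [NormedSpace ℝ E]
    {f : ℝ × ℝ → E} (hf : ContDiff ℝ (⊤ : ℕ∞) f) : Differentiable ℝ f :=
  hf.differentiable (by simp)

theorem smooth_fderiv {E : Type*} [NormedAddCommGroup E] [NormedSpace ℝ E]
    {f : ℝ × ℝ → E} (hf : ContDiff ℝ (⊤ : ℕ∞) f) : ContDiff ℝ (⊤ : ℕ∞) (fderiv ℝ f) :=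
  hf.fderiv_right (by simp)

theorem smooth_pds {E : Type*} [NormedAddCommGroup E] [NormedSpace ℝ E]
    {f : ℝ × ℝ → E} (hf : ContDiff ℝ (⊤ : ℕ∞) f) : ContDiff ℝ (⊤ : ℕ∞) (pds f) := by
  rw [funext (pds_eq (diff_of_smooth hf))]
  exact (smooth_fderiv hf).clm_apply contDiff_const

theorem pdt_pds {E : Type*} [NormedAddCommGroup E] [NormedSpace ℝ E]
    {f : ℝ × ℝ → E} (hf : ContDiff ℝ (⊤ : ℕ∞) f) (p : ℝ × ℝ) :
    pdt (pds f) p = pds (pdt f) p := by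
  have hd := diff_of_smooth hf
  have h2 := diff_of_smooth (smooth_fderiv hf)
  rw [funext (pds_eq hd), funext (pdt_eq hd),
    pdt_eq (fun q => (h2 q).clm_apply (differentiableAt_const _)),
    pds_eq (fun q => (h2 q).clm_apply (differentiableAt_const _)),
    fderiv_clm_apply (h2 p) (differentiableAt_const _),
    fderiv_clm_apply (h2 p) (differentiableAt_const _)]
  have hs : IsSymmSndFDerivAt ℝ f p := hf.contDiffAt.isSymmSndFDerivAt (by
    simp only [minSmoothness_of_isRCLikeNormedField]
    exact WithTop.coe_le_coe.2 (le_top : (2 : ℕ∞) ≤ ⊤))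
  simpa using hs.eq (0, 1) (1, 0)

theorem hasDeriv_s {E : Type*} [NormedAddCommGroup E] [NormedSpace ℝ E]
    {f : ℝ × ℝ → E} (hf : ContDiff ℝ (⊤ : ℕ∞) f) (p : ℝ × ℝ) :
    HasDerivAt (fun s => f (s, p.2)) (pds f p) p.1 := by
  have hd := diff_of_smooth hf
  have : Differentiable ℝ (fun s : ℝ => f (s, p.2)) := by fun_prop
  exact (this p.1).hasDerivAt

theorem hasDeriv_t {E : Type*} [NormedAddCommGroup E] [NormedSpace ℝ E]
    {f : ℝ × ℝ → E} (hf : ContDiff ℝ (⊤ : ℕ∞) f) (p : ℝ × ℝ) :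
    HasDerivAt (fun t => f (p.1, t)) (pdt f p) p.2 := by
  have hd := diff_of_smooth hf
  have : Differentiable ℝ (fun t : ℝ => f (p.1, t)) := by fun_prop
  exact (this p.2).hasDerivAt

/-- For a parallel frame `(T,E₁,E₂)` of signature `(−,+,+)`
satisfying `Tₛ = k₁E₁ + k₂E₂`, `(E₁)ₛ = k₁T`, `(E₂)ₛ = k₂T` and time evolution
`T_t = −(k₂)ₛE₁ + (k₁)ₛE₂`, `(E₁)_t = −(k₂)ₛT + uE₂`, `(E₂)_t = (k₁)ₛT − uE₁`,
one has `uₛ = k₁(k₁)ₛ + k₂(k₂)ₛ`, hence `u(s,t) = ½(k₁² + k₂²)(s,t) + c(t)`. -/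
theorem statement4 (T E₁ E₂ : ℝ × ℝ → V3) (k₁ k₂ u : ℝ × ℝ → ℝ)
    (hT : ContDiff ℝ (⊤ : ℕ∞) T) (hE₁ : ContDiff ℝ (⊤ : ℕ∞) E₁) (hE₂ : ContDiff ℝ (⊤ : ℕ∞) E₂)
    (hk₁ : ContDiff ℝ (⊤ : ℕ∞) k₁) (hk₂ : ContDiff ℝ (⊤ : ℕ∞) k₂) (hu : ContDiff ℝ (⊤ : ℕ∞) u)
    (hTT : ∀ p, lor (T p) (T p) = -1)
    (hE₁E₁ : ∀ p, lor (E₁ p) (E₁ p) = 1)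
    (hE₂E₂ : ∀ p, lor (E₂ p) (E₂ p) = 1)
    (hTE₁ : ∀ p, lor (T p) (E₁ p) = 0)
    (hTE₂ : ∀ p, lor (T p) (E₂ p) = 0)
    (hE₁E₂ : ∀ p, lor (E₁ p) (E₂ p) = 0)
    (hTs : ∀ p, pds T p = k₁ p • E₁ p + k₂ p • E₂ p)
    (hE₁s : ∀ p, pds E₁ p = k₁ p • T p)
    (hE₂s : ∀ p, pds E₂ p = k₂ p • T p)
    (hTt : ∀ p, pdt T p = -(pds k₂ p) • E₁ p + (pds k₁ p) • E₂ p)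
    (hE₁t : ∀ p, pdt E₁ p = -(pds k₂ p) • T p + u p • E₂ p)
    (hE₂t : ∀ p, pdt E₂ p = (pds k₁ p) • T p - u p • E₁ p) :
    (∀ p, pds u p = k₁ p * pds k₁ p + k₂ p * pds k₂ p) ∧
    (∀ t : ℝ, ∃ c : ℝ, ∀ s : ℝ,
      u (s, t) = (k₁ (s, t) ^ 2 + k₂ (s, t) ^ 2) / 2 + c) := by
  have key : ∀ p, pds u p = k₁ p * pds k₁ p + k₂ p * pds k₂ p := by
    intro p
    have h := pdt_pds hE₁ p
    rw [funext hE₁s, funext hE₁t] at h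
    have hl : pdt (fun q => k₁ q • T q) p = k₁ p • pdt T p + pdt k₁ p • T p :=
      ((hasDeriv_t hk₁ p).smul (hasDeriv_t hT p)).deriv
    have hr : pds (fun q => -(pds k₂ q) • T q + u q • E₂ q) p
        = (-(pds k₂ p) • pds T p + (-(pds (pds k₂) p)) • T p)
          + (u p • pds E₂ p + pds u p • E₂ p) :=
      (((hasDeriv_s (smooth_pds hk₂) p).neg.smul (hasDeriv_s hT p)).add
        ((hasDeriv_s hu p).smul (hasDeriv_s hE₂ p))).deriv
    rw [hl, hr, hTt, hTs, hE₂s] at h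
    have h0 := congrFun h 0
    have h1 := congrFun h 1
    have h2 := congrFun h 2
    have a := hE₂E₂ p
    have b := hTE₂ p
    have c := hE₁E₂ p
    simp only [lor, Pi.add_apply, Pi.smul_apply, smul_eq_mul] at h0 h1 h2 a b c
    linear_combination E₂ p 0 * h0 - E₂ p 1 * h1 - E₂ p 2 * h2
      + (k₁ p * pds k₁ p + k₂ p * pds k₂ p - pds u p) * a
      + (pdt k₁ p + pds (pds k₂) p - u p * k₂ p) * b
  refine ⟨key, fun t => ⟨u (0, t) - (k₁ (0, t) ^ 2 + k₂ (0, t) ^ 2) / 2, fun s => ?_⟩⟩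
  have hd : ∀ s : ℝ, HasDerivAt
      (fun s => u (s, t) - (k₁ (s, t) ^ 2 + k₂ (s, t) ^ 2) / 2) 0 s := by
    intro s
    have := (hasDeriv_s hu (s, t)).sub
      ((((hasDeriv_s hk₁ (s, t)).pow 2).add ((hasDeriv_s hk₂ (s, t)).pow 2)).div_const 2)
    refine this.congr_deriv ?_
    rw [key]
    simp
    ring
  have := is_const_of_deriv_eq_zero (fun s => (hd s).differentiableAt) (fun s => (hd s).deriv) s 0
  linarith
end
end

section
/- Let α : ℝ × ℝ → ℝ³ be a smooth solution of the vortex filament equation α_t = α_s ×_L α_ss in Minkowski 3-space such that each curve α(·,t) is a unit-speed spacelike curve with timelike principal normal, with smooth Frenet frame (T, N, B) satisfying ⟨T,T⟩_L = ⟨B,B⟩_L = 1, ⟨N,N⟩_L = −1, α_t = κB, and Frenet equations Tₛ = κN, Nₛ = κT + τB, Bₛ = τN with κ > 0. Then there exist smooth maps E₁, E₂ : ℝ × ℝ → ℝ³ and smooth functions k₁, k₂ : ℝ × ℝ → ℝ such that (T, E₁, E₂) is pairwise ⟨·,·⟩_L-orthogonal with ⟨E₁,E₁⟩_L = −1, ⟨E₂,E₂⟩_L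 = 1, and Tₛ = k₁E₁ + k₂E₂, (E₁)ₛ = k₁T, (E₂)ₛ = −k₂T, and T_t = (k₂)ₛE₁ + (k₁)ₛE₂, (E₁)_t = (k₂)ₛT + ½(k₁² − k₂²)E₂, (E₂)_t = −(k₁)ₛT + ½(k₁² − k₂²)E₁. -/
noncomputable section

open Real

section helpers

variable {E : Type*} [NormedAddCommGroup E] [NormedSpace ℝ E]

theorem hd_s_of_fderiv {f : ℝ × ℝ → E} {L : ℝ × ℝ →L[ℝ] E} {p : ℝ × ℝ}
    (h : HasFDerivAt f L p) : HasDerivAt (fun s => f (s, p.2)) (L (1, 0)) p.1 := by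
  have h1 : HasDerivAt (fun s : ℝ => (s, p.2)) ((1 : ℝ), (0 : ℝ)) p.1 :=
    (hasDerivAt_id p.1).prodMk (hasDerivAt_const p.1 p.2)
  exact HasFDerivAt.comp_hasDerivAt (f := fun s : ℝ => (s, p.2)) p.1 h h1

theorem hd_t_of_fderiv {f : ℝ × ℝ → E} {L : ℝ × ℝ →L[ℝ] E} {p : ℝ × ℝ}
    (h : HasFDerivAt f L p) : HasDerivAt (fun t => f (p.1, t)) (L (0, 1)) p.2 := by
  have h1 : HasDerivAt (fun t : ℝ => (p.1, t)) ((0 : ℝ), (1 : ℝ)) p.2 :=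
    (hasDerivAt_const p.2 p.1).prodMk (hasDerivAt_id p.2)
  exact HasFDerivAt.comp_hasDerivAt (f := fun t : ℝ => (p.1, t)) p.2 h h1

theorem cd_fd {f : ℝ × ℝ → E} (hf : ContDiff ℝ (⊤ : ℕ∞) f) (p : ℝ × ℝ) :
    HasFDerivAt f (fderiv ℝ f p) p :=
  (hf.differentiable (by simp) p).hasFDerivAt

theorem pds_eq_fd {f : ℝ × ℝ → E} (hf : ContDiff ℝ (⊤ : ℕ∞) f) (p : ℝ × ℝ) :
    pds f p = fderiv ℝ f p (1, 0) := (hd_s_of_fderiv (cd_fd hf p)).deriv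

theorem pdt_eq_fd {f : ℝ × ℝ → E} (hf : ContDiff ℝ (⊤ : ℕ∞) f) (p : ℝ × ℝ) :
    pdt f p = fderiv ℝ f p (0, 1) := (hd_t_of_fderiv (cd_fd hf p)).deriv

theorem hds {f : ℝ × ℝ → E} (hf : ContDiff ℝ (⊤ : ℕ∞) f) (p : ℝ × ℝ) :
    HasDerivAt (fun s => f (s, p.2)) (pds f p) p.1 := by
  rw [pds_eq_fd hf]; exact hd_s_of_fderiv (cd_fd hf p)

theorem hdt {f : ℝ × ℝ → E} (hf : ContDiff ℝ (⊤ : ℕ∞) f) (p : ℝ × ℝ) :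
    HasDerivAt (fun t => f (p.1, t)) (pdt f p) p.2 := by
  rw [pdt_eq_fd hf]; exact hd_t_of_fderiv (cd_fd hf p)

theorem cd_pds {f : ℝ × ℝ → E} (hf : ContDiff ℝ (⊤ : ℕ∞) f) :
    ContDiff ℝ (⊤ : ℕ∞) (pds f) := by
  rw [show pds f = fun p => fderiv ℝ f p (1, 0) from funext (pds_eq_fd hf)]
  exact (contDiff_infty_iff_fderiv.1 hf).2.clm_apply contDiff_const

theorem cd_pdt {f : ℝ × ℝ → E} (hf : ContDiff ℝ (⊤ : ℕ∞) f) :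
    ContDiff ℝ (⊤ : ℕ∞) (pdt f) := by
  rw [show pdt f = fun p => fderiv ℝ f p (0, 1) from funext (pdt_eq_fd hf)]
  exact (contDiff_infty_iff_fderiv.1 hf).2.clm_apply contDiff_const

theorem pd_comm {f : ℝ × ℝ → E} (hf : ContDiff ℝ (⊤ : ℕ∞) f) (p : ℝ × ℝ) :
    pdt (pds f) p = pds (pdt f) p := by
  have h2 := (contDiff_infty_iff_fderiv.1 hf).2
  rw [pdt_eq_fd (cd_pds hf), pds_eq_fd (cd_pdt hf),
    show pdt f = fun p => fderiv ℝ f p (0, 1) from funext (pdt_eq_fd hf),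
    show pds f = fun p => fderiv ℝ f p (1, 0) from funext (pds_eq_fd hf)]
  have e : ∀ v : ℝ × ℝ, fderiv ℝ (fun p => fderiv ℝ f p v) p
      = (fderiv ℝ (fderiv ℝ f) p).flip v := by
    intro v
    have := (cd_fd h2 p).clm_apply (hasFDerivAt_const v p)
    rw [this.fderiv]
    ext <;> simp
  rw [e, e]
  exact second_derivative_symmetric (fun y => cd_fd hf y) (cd_fd h2 p) _ _

theorem hd_lor {f g : ℝ → V3} {f' g' : V3} {x : ℝ} (hf : HasDerivAt f f' x)
    (hg : HasDerivAt g g' x) :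
    HasDerivAt (fun s => lor (f s) (g s)) (lor f' (g x) + lor (f x) g') x := by
  have hf := hasDerivAt_pi.1 hf
  have hg := hasDerivAt_pi.1 hg
  have := ((((hf 0).mul (hg 0)).neg).add ((hf 1).mul (hg 1))).add ((hf 2).mul (hg 2))
  refine this.congr_deriv ?_
  simp only [lor]; ring

theorem cd_lor {f g : ℝ × ℝ → V3} (hf : ContDiff ℝ (⊤ : ℕ∞) f) (hg : ContDiff ℝ (⊤ : ℕ∞) g) :
    ContDiff ℝ (⊤ : ℕ∞) (fun p => lor (f p) (g p)) := by
  have hf := contDiff_pi.1 hf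
  have hg := contDiff_pi.1 hg
  exact ((((hf 0).mul (hg 0)).neg).add ((hf 1).mul (hg 1))).add ((hf 2).mul (hg 2))

theorem pds_lor {f g : ℝ × ℝ → V3} (hf : ContDiff ℝ (⊤ : ℕ∞) f) (hg : ContDiff ℝ (⊤ : ℕ∞) g)
    (p : ℝ × ℝ) : pds (fun p => lor (f p) (g p)) p = lor (pds f p) (g p) + lor (f p) (pds g p) :=
  (hd_lor (hds hf p) (hds hg p)).deriv

theorem pdt_lor {f g : ℝ × ℝ → V3} (hf : ContDiff ℝ (⊤ : ℕ∞) f) (hg : ContDiff ℝ (⊤ : ℕ∞) g)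
    (p : ℝ × ℝ) : pdt (fun p => lor (f p) (g p)) p = lor (pdt f p) (g p) + lor (f p) (pdt g p) :=
  (hd_lor (hdt hf p) (hdt hg p)).deriv

theorem pds_const' (c : E) (p : ℝ × ℝ) : pds (fun _ => c) p = 0 := by simp [pds]
theorem pdt_const' (c : E) (p : ℝ × ℝ) : pdt (fun _ => c) p = 0 := by simp [pdt]

theorem lor_comm' (x y : V3) : lor x y = lor y x := by simp only [lor]; ring
theorem lor_add_left (x y z : V3) : lor (x + y) z = lor x z + lor y z := by
  simp only [lor, Pi.add_apply]; ring
theorem lor_add_right (x y z : V3) : lor z (x + y) = lor z x + lor z y := by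
  simp only [lor, Pi.add_apply]; ring
theorem lor_smul_left (c : ℝ) (x y : V3) : lor (c • x) y = c * lor x y := by
  simp only [lor, Pi.smul_apply, smul_eq_mul]; ring
theorem lor_smul_right (c : ℝ) (x y : V3) : lor x (c • y) = c * lor x y := by
  simp only [lor, Pi.smul_apply, smul_eq_mul]; ring

theorem lor_expand {T N B : V3} (hTT : lor T T = 1) (hNN : lor N N = -1) (hBB : lor B B = 1)
    (hTN : lor T N = 0) (hTB : lor T B = 0) (hNB : lor N B = 0) (v : V3) :
    v = lor v T • T + (-lor v N) • N + lor v B • B := by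
  have key : (!![T 0, T 1, T 2; N 0, N 1, N 2; B 0, B 1, B 2] : Matrix (Fin 3) (Fin 3) ℝ) *
      !![-T 0, N 0, -B 0; T 1, -N 1, B 1; T 2, -N 2, B 2] = 1 := by
    simp only [lor] at *
    ext i j
    fin_cases i <;> fin_cases j <;> simp [Matrix.mul_apply, Fin.sum_univ_three] <;> linarith
  have key2 := mul_eq_one_comm.1 key
  have e := fun i j => congrFun (congrFun key2 i) j
  simp [Matrix.mul_apply, Fin.sum_univ_three, Fin.forall_fin_succ] at e
  obtain ⟨⟨a1, a2, a3⟩, ⟨b1, b2, b3⟩, c1, c2, c3⟩ := e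
  ext i
  fin_cases i <;> simp [lor]
  · linear_combination (-v 0) * a1 + v 1 * a2 + v 2 * a3
  · linear_combination v 0 * b1 - v 1 * b2 - v 2 * b3
  · linear_combination v 0 * c1 - v 1 * c2 - v 2 * c3

theorem exists_potential {f g : ℝ × ℝ → ℝ} (hf : ContDiff ℝ (⊤ : ℕ∞) f)
    (hg : ContDiff ℝ (⊤ : ℕ∞) g) (h : ∀ p, pdt f p = pds g p) :
    ∃ θ : ℝ × ℝ → ℝ, ContDiff ℝ (⊤ : ℕ∞) θ ∧ (∀ p, pds θ p = f p) ∧ ∀ p, pdt θ p = g p := by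
  set ω : ℝ × ℝ → (ℝ × ℝ →L[ℝ] ℝ) := fun p =>
    f p • ContinuousLinearMap.fst ℝ ℝ ℝ + g p • ContinuousLinearMap.snd ℝ ℝ ℝ with hω
  have cω : ContDiff ℝ (⊤ : ℕ∞) ω := (hf.smul contDiff_const).add (hg.smul contDiff_const)
  obtain ⟨θ, hθ⟩ := (convex_univ (𝕜 := ℝ) (E := ℝ × ℝ)).exists_forall_hasFDerivAt_of_fderiv_symmetric
    (ω := ω) isOpen_univ (cω.differentiable (by simp)).differentiableOn (by
      intro a _ x y
      have hd : HasFDerivAt ω _ a := ((cd_fd hf a).smul_const (ContinuousLinearMap.fst ℝ ℝ ℝ)).add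
        ((cd_fd hg a).smul_const (ContinuousLinearMap.snd ℝ ℝ ℝ))
      have h' := h a
      rw [pdt_eq_fd hf, pds_eq_fd hg] at h'
      have lin : ∀ (L : ℝ × ℝ →L[ℝ] ℝ) (u : ℝ × ℝ), L u = u.1 * L (1, 0) + u.2 * L (0, 1) := by
        intro L u
        conv_lhs => rw [show u = u.1 • ((1 : ℝ), (0 : ℝ)) + u.2 • ((0 : ℝ), (1 : ℝ)) by
          ext <;> simp]
        rw [map_add, map_smul, map_smul, smul_eq_mul, smul_eq_mul]
      rw [hd.fderiv]
      simp only [ContinuousLinearMap.add_apply, ContinuousLinearMap.smulRight_apply,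
        ContinuousLinearMap.smul_apply, ContinuousLinearMap.coe_fst', ContinuousLinearMap.coe_snd',
        smul_eq_mul]
      rw [lin _ x, lin _ y, lin (fderiv ℝ g a) x, lin (fderiv ℝ g a) y, h']
      ring)
  have hθ' : ∀ a, HasFDerivAt θ (ω a) a := fun a => hθ a trivial
  refine ⟨θ, ?_, ?_, ?_⟩
  · refine contDiff_infty_iff_fderiv.2 ⟨fun a => (hθ' a).differentiableAt, ?_⟩
    rw [show fderiv ℝ θ = ω from funext fun a => (hθ' a).fderiv]
    exact cω
  · intro p
    have := (hd_s_of_fderiv (hθ' p)).deriv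
    simpa [hω, pds, pdt] using this
  · intro p
    have := (hd_t_of_fderiv (hθ' p)).deriv
    simpa [hω, pds, pdt] using this

end helpers

/-- For a smooth solution `α` of the vortex filament equation whose
curves `α(·,t)` are unit-speed spacelike with timelike principal normal, with smooth
Frenet frame `(T,N,B)` (`⟨T,T⟩_L = ⟨B,B⟩_L = 1`, `⟨N,N⟩_L = −1`, `α_t = κB`,
`Tₛ = κN`, `Nₛ = κT + τB`, `Bₛ = τN`, `κ > 0`), there exists a parallel normal frame
`(T,E₁,E₂)` with `⟨E₁,E₁⟩_L = −1`, `⟨E₂,E₂⟩_L = 1` and principal curvatures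
`k₁, k₂` satisfying the stated `s`- and `t`-evolution equations. -/
theorem statement12 (α T N B : ℝ × ℝ → V3) (κ τ : ℝ × ℝ → ℝ)
    (hα : ContDiff ℝ (⊤ : ℕ∞) α) (hT : ContDiff ℝ (⊤ : ℕ∞) T) (hN : ContDiff ℝ (⊤ : ℕ∞) N)
    (hB : ContDiff ℝ (⊤ : ℕ∞) B) (hκ : ContDiff ℝ (⊤ : ℕ∞) κ) (hτ : ContDiff ℝ (⊤ : ℕ∞) τ)
    (hvfe : ∀ p, pdt α p = lcross (pds α p) (pds (pds α) p))
    (hαs : ∀ p, pds α p = T p)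
    (hTT : ∀ p, lor (T p) (T p) = 1)
    (hNN : ∀ p, lor (N p) (N p) = -1)
    (hBB : ∀ p, lor (B p) (B p) = 1)
    (hαt : ∀ p, pdt α p = κ p • B p)
    (hTs : ∀ p, pds T p = κ p • N p)
    (hNs : ∀ p, pds N p = κ p • T p + τ p • B p)
    (hBs : ∀ p, pds B p = τ p • N p)
    (hκpos : ∀ p, 0 < κ p) :
    ∃ E₁ E₂ : ℝ × ℝ → V3, ∃ k₁ k₂ : ℝ × ℝ → ℝ,
      ContDiff ℝ (⊤ : ℕ∞) E₁ ∧ ContDiff ℝ (⊤ : ℕ∞) E₂ ∧ ContDiff ℝ (⊤ : ℕ∞) k₁ ∧ ContDiff ℝ (⊤ : ℕ∞) k₂ ∧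
      (∀ p, lor (E₁ p) (E₁ p) = -1) ∧
      (∀ p, lor (E₂ p) (E₂ p) = 1) ∧
      (∀ p, lor (T p) (E₁ p) = 0) ∧
      (∀ p, lor (T p) (E₂ p) = 0) ∧
      (∀ p, lor (E₁ p) (E₂ p) = 0) ∧
      (∀ p, pds T p = k₁ p • E₁ p + k₂ p • E₂ p) ∧
      (∀ p, pds E₁ p = k₁ p • T p) ∧
      (∀ p, pds E₂ p = -(k₂ p) • T p) ∧
      (∀ p, pdt T p = (pds k₂ p) • E₁ p + (pds k₁ p) • E₂ p) ∧
      (∀ p, pdt E₁ p = (pds k₂ p) • T p + ((k₁ p ^ 2 - k₂ p ^ 2) / 2) • E₂ p) ∧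
      (∀ p, pdt E₂ p = -(pds k₁ p) • T p + ((k₁ p ^ 2 - k₂ p ^ 2) / 2) • E₁ p) := by
  have eTs : pds T = fun p => κ p • N p := funext hTs
  have eNs : pds N = fun p => κ p • T p + τ p • B p := funext hNs
  have eBs : pds B = fun p => τ p • N p := funext hBs
  have eαs : pds α = T := funext hαs
  have eαt : pdt α = fun p => κ p • B p := funext hαt
  -- B = T × N
  have hBc : ∀ p, B p = lcross (T p) (N p) := by
    intro p
    have h := hvfe p
    rw [hαt, eαs, hTs] at h
    have hk := (hκpos p).ne'
    have h2 : κ p • B p = κ p • lcross (T p) (N p) := by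
      rw [h]; ext i; fin_cases i <;> simp [lcross] <;> ring
    exact smul_right_injective _ hk h2
  have hTB : ∀ p, lor (T p) (B p) = 0 := by
    intro p; rw [hBc]; simp [lor, lcross]; ring
  have hNB : ∀ p, lor (N p) (B p) = 0 := by
    intro p; rw [hBc]; simp [lor, lcross]; ring
  have hTN : ∀ p, lor (T p) (N p) = 0 := by
    intro p
    have h := pds_lor hT hT p
    rw [show (fun p => lor (T p) (T p)) = fun _ => (1 : ℝ) from funext hTT, pds_const', hTs,
      lor_smul_left, lor_smul_right, lor_comm' (N p)] at h
    have hk := (hκpos p).ne'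
    have : κ p * lor (T p) (N p) = 0 := by linarith
    exact (mul_eq_zero.1 this).resolve_left hk
  -- time derivatives
  have hTt : ∀ p, pdt T p = pds κ p • B p + (κ p * τ p) • N p := by
    intro p
    have h := pd_comm hα p
    rw [eαs, eαt] at h
    rw [h]
    have h2 := ((hds hκ p).smul (hds hB p)).deriv
    refine h2.trans ?_
    rw [hBs, smul_smul, add_comm]
  have tTN : ∀ p, lor (pdt N p) (T p) = κ p * τ p := by
    intro p
    have h := pdt_lor hT hN p
    rw [show (fun p => lor (T p) (N p)) = fun _ => (0 : ℝ) from funext hTN, pdt_const', hTt,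
      lor_add_left, lor_smul_left, lor_smul_left, hNN, lor_comm' (B p), hNB,
      lor_comm' (T p)] at h
    linarith
  have tNN : ∀ p, lor (pdt N p) (N p) = 0 := by
    intro p
    have h := pdt_lor hN hN p
    rw [show (fun p => lor (N p) (N p)) = fun _ => (-1 : ℝ) from funext hNN, pdt_const',
      lor_comm' (N p)] at h
    linarith
  have tBB : ∀ p, lor (pdt B p) (B p) = 0 := by
    intro p
    have h := pdt_lor hB hB p
    rw [show (fun p => lor (B p) (B p)) = fun _ => (1 : ℝ) from funext hBB, pdt_const',
      lor_comm' (B p)] at h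
    linarith
  have tBT : ∀ p, lor (pdt B p) (T p) = -pds κ p := by
    intro p
    have h := pdt_lor hT hB p
    rw [show (fun p => lor (T p) (B p)) = fun _ => (0 : ℝ) from funext hTB, pdt_const', hTt,
      lor_add_left, lor_smul_left, lor_smul_left, hBB, hNB, lor_comm' (T p)] at h
    linarith
  have tBN : ∀ p, lor (pdt B p) (N p) = -lor (pdt N p) (B p) := by
    intro p
    have h := pdt_lor hN hB p
    rw [show (fun p => lor (N p) (B p)) = fun _ => (0 : ℝ) from funext hNB, pdt_const',
      lor_comm' (N p)] at h
    linarith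
  set b : ℝ × ℝ → ℝ := fun p => lor (pdt N p) (B p) with hb
  have cb : ContDiff ℝ (⊤ : ℕ∞) b := cd_lor (cd_pdt hN) hB
  have hNt : ∀ p, pdt N p = (κ p * τ p) • T p + b p • B p := by
    intro p
    have h := lor_expand (hTT p) (hNN p) (hBB p) (hTN p) (hTB p) (hNB p) (pdt N p)
    rw [tTN, tNN] at h
    simpa [hb] using h
  have hBt : ∀ p, pdt B p = (-pds κ p) • T p + b p • N p := by
    intro p
    have h := lor_expand (hTT p) (hNN p) (hBB p) (hTN p) (hTB p) (hNB p) (pdt B p)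
    rw [tBT, tBN, tBB] at h
    simpa [hb] using h
  have hτt : ∀ p, pdt τ p = pds b p - κ p * pds κ p := by
    intro p
    have e : τ = fun p => lor (pds N p) (B p) := by
      funext q
      rw [hNs, lor_add_left, lor_smul_left, lor_smul_left, hTB, hBB]; ring
    have h1 := pdt_lor (cd_pds hN) hB p
    rw [← e, pd_comm hN, hNs, lor_add_left, lor_smul_left, lor_smul_left,
      lor_comm' (T p), lor_comm' (B p), tBT, tBB] at h1
    have h2 := pds_lor (cd_pdt hN) hB p
    rw [hBs, lor_smul_right, tNN] at h2
    change pds b p = _ at h2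
    linarith
  obtain ⟨θ, cθ, hθs, hθt⟩ := exists_potential (f := fun p => -τ p)
    (g := fun p => κ p ^ 2 / 2 - b p) hτ.neg (((hκ.pow 2).div_const 2).sub cb) (by
      intro p
      have h1 : pdt (fun p => -τ p) p = -pdt τ p := (hdt hτ p).neg.deriv
      have h2 : pds (fun p => κ p ^ 2 / 2 - b p) p = _ :=
        ((((hds hκ p).pow 2).div_const 2).sub (hds cb p)).deriv
      rw [h1, h2, hτt]
      push_cast
      ring)
  have cc : ContDiff ℝ (⊤ : ℕ∞) (fun p => cosh (θ p)) := Real.contDiff_cosh.comp cθ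
  have cs : ContDiff ℝ (⊤ : ℕ∞) (fun p => sinh (θ p)) := Real.contDiff_sinh.comp cθ
  have sq : ∀ p, cosh (θ p) ^ 2 = sinh (θ p) ^ 2 + 1 := fun p => Real.cosh_sq (θ p)
  have hk1 : ∀ p, pds (fun p => κ p * cosh (θ p)) p =
      pds κ p * cosh (θ p) - κ p * τ p * sinh (θ p) := by
    intro p
    refine ((hds hκ p).mul (hds cθ p).cosh).deriv.trans ?_
    rw [hθs]; ring
  have hk2 : ∀ p, pds (fun p => -(κ p * sinh (θ p))) p =
      -(pds κ p * sinh (θ p)) + κ p * τ p * cosh (θ p) := by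
    intro p
    refine ((hds hκ p).mul (hds cθ p).sinh).neg.deriv.trans ?_
    rw [hθs]; ring
  refine ⟨fun p => cosh (θ p) • N p + sinh (θ p) • B p,
    fun p => sinh (θ p) • N p + cosh (θ p) • B p,
    fun p => κ p * cosh (θ p), fun p => -(κ p * sinh (θ p)),
    (cc.smul hN).add (cs.smul hB), (cs.smul hN).add (cc.smul hB), hκ.mul cc, (hκ.mul cs).neg,
    ?_, ?_, ?_, ?_, ?_, ?_, ?_, ?_, ?_, ?_, ?_⟩
  · intro p
    simp only [lor_add_left, lor_add_right, lor_smul_left, lor_smul_right, hNN, hBB, hNB,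
      lor_comm' (B p) (N p)]
    linear_combination -(sq p)
  · intro p
    simp only [lor_add_left, lor_add_right, lor_smul_left, lor_smul_right, hNN, hBB, hNB,
      lor_comm' (B p) (N p)]
    linear_combination sq p
  · intro p
    simp only [lor_add_right, lor_smul_right, hTN, hTB]; ring
  · intro p
    simp only [lor_add_right, lor_smul_right, hTN, hTB]; ring
  · intro p
    simp only [lor_add_left, lor_add_right, lor_smul_left, lor_smul_right, hNN, hBB, hNB,
      lor_comm' (B p) (N p)]
    ring
  · intro p
    rw [hTs]
    ext i
    simp only [Pi.add_apply, Pi.smul_apply, smul_eq_mul]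
    linear_combination (-(κ p * N p i)) * sq p
  · intro p
    refine (((hds cθ p).cosh.smul (hds hN p)).add ((hds cθ p).sinh.smul (hds hB p))).deriv.trans ?_
    rw [hθs, hNs, hBs]
    ext i
    simp only [Pi.add_apply, Pi.smul_apply, smul_eq_mul]
    ring
  · intro p
    refine (((hds cθ p).sinh.smul (hds hN p)).add ((hds cθ p).cosh.smul (hds hB p))).deriv.trans ?_
    rw [hθs, hNs, hBs]
    ext i
    simp only [Pi.add_apply, Pi.smul_apply, smul_eq_mul]
    ring
  · intro p
    rw [hk1, hk2, hTt]
    ext i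
    simp only [Pi.add_apply, Pi.smul_apply, smul_eq_mul]
    linear_combination (-(κ p * τ p * N p i) - pds κ p * B p i) * sq p
  · intro p
    rw [hk2]
    refine (((hdt cθ p).cosh.smul (hdt hN p)).add ((hdt cθ p).sinh.smul (hdt hB p))).deriv.trans ?_
    rw [hθt, hNt, hBt]
    ext i
    simp only [Pi.add_apply, Pi.smul_apply, smul_eq_mul]
    linear_combination
      (-(κ p ^ 2 / 2 * (sinh (θ p) * N p i + cosh (θ p) * B p i))) * sq p
  · intro p
    rw [hk1]
    refine (((hdt cθ p).sinh.smul (hdt hN p)).add ((hdt cθ p).cosh.smul (hdt hB p))).deriv.trans ?_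
    rw [hθt, hNt, hBt]
    ext i
    simp only [Pi.add_apply, Pi.smul_apply, smul_eq_mul]
    linear_combination
      (-(κ p ^ 2 / 2 * (cosh (θ p) * N p i + sinh (θ p) * B p i))) * sq p
end
end

section
/- Let k₁, k₂ : ℝ × ℝ → ℝ be smooth functions satisfying (k₁)_t = (k₂)ₛₛ + ½(k₁² − k₂²)k₂ and (k₂)_t = (k₁)ₛₛ + ½(k₁² − k₂²)k₁. Then the pair of functions q = (1/√2)(k₁ + k₂) and r = (1/√2)(k₁ − k₂) is a solution of the non-linear heat system: q_t = q_ss + q²r and r_t = −r_ss − r²q. -/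
noncomputable section

open Real

theorem aux_slice_s {f : ℝ × ℝ → ℝ} (hf : ContDiff ℝ (⊤ : ℕ∞) f) (y : ℝ) :
    ContDiff ℝ (⊤ : ℕ∞) (fun s => f (s, y)) :=
  hf.comp (contDiff_id.prodMk contDiff_const)

theorem aux_slice_t {f : ℝ × ℝ → ℝ} (hf : ContDiff ℝ (⊤ : ℕ∞) f) (x : ℝ) :
    ContDiff ℝ (⊤ : ℕ∞) (fun t => f (x, t)) :=
  hf.comp (contDiff_const.prodMk contDiff_id)

theorem aux_diff {g : ℝ → ℝ} (hg : ContDiff ℝ (⊤ : ℕ∞) g) : Differentiable ℝ g :=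
  hg.differentiable (by simp)

theorem aux_diff_deriv {g : ℝ → ℝ} (hg : ContDiff ℝ (⊤ : ℕ∞) g) :
    Differentiable ℝ (deriv g) :=
  aux_diff (contDiff_infty_iff_deriv.1 hg).2

theorem aux_lin {g h : ℝ → ℝ} (hg : Differentiable ℝ g) (hh : Differentiable ℝ h)
    (a b x : ℝ) : deriv (fun s => a * g s + b * h s) x = a * deriv g x + b * deriv h x :=
  (((hg x).hasDerivAt.const_mul a).add ((hh x).hasDerivAt.const_mul b)).deriv

theorem aux_pdt {f g : ℝ × ℝ → ℝ} (hf : ContDiff ℝ (⊤ : ℕ∞) f)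
    (hg : ContDiff ℝ (⊤ : ℕ∞) g) (a b : ℝ) (p : ℝ × ℝ) :
    pdt (fun p => a * f p + b * g p) p = a * pdt f p + b * pdt g p :=
  aux_lin (aux_diff (aux_slice_t hf p.1)) (aux_diff (aux_slice_t hg p.1)) a b p.2

theorem aux_pds {f g : ℝ × ℝ → ℝ} (hf : ContDiff ℝ (⊤ : ℕ∞) f)
    (hg : ContDiff ℝ (⊤ : ℕ∞) g) (a b : ℝ) :
    pds (fun p => a * f p + b * g p) = fun p => a * pds f p + b * pds g p := by
  funext p
  exact aux_lin (aux_diff (aux_slice_s hf p.2)) (aux_diff (aux_slice_s hg p.2)) a b p.1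

theorem aux_pdss {f g : ℝ × ℝ → ℝ} (hf : ContDiff ℝ (⊤ : ℕ∞) f)
    (hg : ContDiff ℝ (⊤ : ℕ∞) g) (a b : ℝ) (p : ℝ × ℝ) :
    pds (pds (fun p => a * f p + b * g p)) p = a * pds (pds f) p + b * pds (pds g) p := by
  rw [aux_pds hf hg]
  exact aux_lin (aux_diff_deriv (aux_slice_s hf p.2)) (aux_diff_deriv (aux_slice_s hg p.2))
    a b p.1

/-- If smooth `k₁, k₂ : ℝ × ℝ → ℝ` satisfy
`(k₁)_t = (k₂)ₛₛ + ½(k₁² − k₂²)k₂` and `(k₂)_t = (k₁)ₛₛ + ½(k₁² − k₂²)k₁`, then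
`q = (1/√2)(k₁ + k₂)` and `r = (1/√2)(k₁ − k₂)` solve the nonlinear heat system
`q_t = q_ss + q²r`, `r_t = −r_ss − r²q`. -/
theorem statement19 (k₁ k₂ : ℝ × ℝ → ℝ)
    (hk₁ : ContDiff ℝ (⊤ : ℕ∞) k₁) (hk₂ : ContDiff ℝ (⊤ : ℕ∞) k₂)
    (e₁ : ∀ p, pdt k₁ p = pds (pds k₂) p + (k₁ p ^ 2 - k₂ p ^ 2) / 2 * k₂ p)
    (e₂ : ∀ p, pdt k₂ p = pds (pds k₁) p + (k₁ p ^ 2 - k₂ p ^ 2) / 2 * k₁ p)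
    (q r : ℝ × ℝ → ℝ)
    (hq : ∀ p, q p = (1 / Real.sqrt 2) * (k₁ p + k₂ p))
    (hr : ∀ p, r p = (1 / Real.sqrt 2) * (k₁ p - k₂ p)) :
    (∀ p, pdt q p = pds (pds q) p + q p ^ 2 * r p) ∧
    (∀ p, pdt r p = -(pds (pds r) p) - r p ^ 2 * q p) := by
  have hc : (1 / Real.sqrt 2) ^ 2 = 1 / 2 := by
    rw [div_pow, Real.sq_sqrt (by norm_num)]; norm_num
  generalize 1 / Real.sqrt 2 = c at hq hr hc
  have hq' : q = fun p => c * k₁ p + c * k₂ p := by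
    funext p; rw [hq]; ring
  have hr' : r = fun p => c * k₁ p + (-c) * k₂ p := by
    funext p; rw [hr]; ring
  constructor
  · intro p
    rw [hq p, hr p, hq', aux_pdt hk₁ hk₂, aux_pdss hk₁ hk₂, e₁, e₂]
    linear_combination (-c * (k₁ p + k₂ p) ^ 2 * (k₁ p - k₂ p)) * hc
  · intro p
    rw [hq p, hr p, hr', aux_pdt hk₁ hk₂, aux_pdss hk₁ hk₂, e₁, e₂]
    linear_combination (c * (k₁ p - k₂ p) ^ 2 * (k₁ p + k₂ p)) * hc
end
end
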